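/- In the field ℚ(t) of rational functions, Δ_{2,2,3,5}(t) = P(t)·Or_{2,2,3,5}(t), where P(t) = (1−t⁷)(1−t⁸)/((1−t²)(1−t⁵)(1−t⁴)(1−t³)). (This is the identity ∏_{j=1}^{2} ζ̄_{X,j}(t) = P_{X̃₀}(t)·Or_{X̃₀}(t) of the main theorem for the virtual singularity X = K♭_{1,−1}, whose dual series has k=0 element L_{1,0} with weight system (2,5,4,3; 7,8) and whose Gabrielov numbers are 2,2;3,5.) -/

import Mathlib

/-!
Both sides equal the palindromic polynomial `[7] (1 + t ^ 4) (1 + t)`, where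
`[n] = 1 + t + ⋯ + t ^ (n - 1)`. On the right, the factors `1 - t ^ γ` of `Orb` cancel against the
weights `2, 3, 5`. On the left, every quotient `(t ^ n - 1) / (t - 1)` becomes `[n]`, and the
remaining identity is one of polynomials in `t`. The cancellations are legitimate because `t` is
transcendental, so that `t ^ n ≠ 1` for `n ≠ 0` (`one_sub_t_pow_ne_zero`).
-/

open Finset

/-- The generator `t` of the field `ℚ(t)` of rational functions. -/
noncomputable def t : RatFunc ℚ := RatFunc.X

/-- `Δ_{γ₁,γ₂,γ₃,γ₄}(t)`, the characteristic polynomial of the Coxeter element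
corresponding to the graph `S_{γ₁,γ₂,γ₃,γ₄}`. -/
noncomputable def Δ (γ : Fin 4 → ℕ) : RatFunc ℚ :=
  (t ^ 3 - 2 * t ^ 2 - 2 * t + 1) * ∏ i, (t ^ γ i - 1) / (t - 1)
    + t ^ 2 * ∑ i, ((t ^ (γ i - 1) - 1) / (t - 1)) *
        ∏ j ∈ univ.erase i, (t ^ γ j - 1) / (t - 1)

/-- `Or_{γ₁,γ₂,γ₃,γ₄}(t) = (1-t)⁻² · ∏ᵢ (1 - t^{γᵢ})`. -/
noncomputable def Orb (γ : Fin 4 → ℕ) : RatFunc ℚ :=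
  ((1 - t) ^ 2)⁻¹ * ∏ i, (1 - t ^ γ i)

/-- The variable `t` is not a root of unity in `ℚ(t)`: compare degrees of polynomials. -/
theorem one_sub_t_pow_ne_zero (n : ℕ) (hn : n ≠ 0) : (1 : RatFunc ℚ) - t ^ n ≠ 0 := by
  intro h
  have h1 : algebraMap (Polynomial ℚ) (RatFunc ℚ) (Polynomial.X ^ n) =
      algebraMap (Polynomial ℚ) (RatFunc ℚ) 1 := by
    rw [map_pow, map_one, RatFunc.algebraMap_X]
    exact (sub_eq_zero.mp h).symm
  have h2 := congrArg Polynomial.natDegree (RatFunc.algebraMap_injective ℚ h1)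
  simp at h2
  exact hn h2

theorem t_pow_sub_one_div (n : ℕ) :
    (t ^ n - 1) / (t - 1) = ∑ k ∈ range n, t ^ k := by
  have h : t ≠ 1 := fun h => one_sub_t_pow_ne_zero 1 one_ne_zero (by rw [h]; ring)
  exact (geom_sum_eq h n).symm

/-- The main theorem for the virtual singularity `K♭_{1,-1}` (Gabrielov numbers
`2,2;3,5`; dual `k=0` element `L_{1,0}` with weight system `(2,5,4,3;7,8)`). -/
theorem stmt_14 :
    Δ ![2, 2, 3, 5]
      = (1 - t ^ 7) * (1 - t ^ 8) /
          ((1 - t ^ 2) * (1 - t ^ 5) * (1 - t ^ 4) * (1 - t ^ 3))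
        * Orb ![2, 2, 3, 5] := by
  have e0 : (univ : Finset (Fin 4)).erase 0 = {1, 2, 3} := by decide
  have e1 : (univ : Finset (Fin 4)).erase 1 = {0, 2, 3} := by decide
  have e2 : (univ : Finset (Fin 4)).erase 2 = {0, 1, 3} := by decide
  have e3 : (univ : Finset (Fin 4)).erase 3 = {0, 1, 2} := by decide
  have hL : Δ ![2, 2, 3, 5] =
      (∑ k ∈ range 7, t ^ k) * (1 + t ^ 4) * (1 + t) := by
    simp only [Δ, t_pow_sub_one_div, Fin.sum_univ_four, Fin.prod_univ_four, e0, e1, e2, e3]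
    simp [Finset.sum_range_succ]
    ring
  have h1 : 1 - t ≠ 0 := by simpa using one_sub_t_pow_ne_zero 1 one_ne_zero
  have h2 := one_sub_t_pow_ne_zero 2 (by norm_num)
  have h3 := one_sub_t_pow_ne_zero 3 (by norm_num)
  have h4 := one_sub_t_pow_ne_zero 4 (by norm_num)
  have h5 := one_sub_t_pow_ne_zero 5 (by norm_num)
  have hO : Orb ![2, 2, 3, 5] =
      (1 - t ^ 2) * (1 - t ^ 2) * (1 - t ^ 3) * (1 - t ^ 5) / (1 - t) ^ 2 := by
    simp [Orb, Fin.prod_univ_four, div_eq_inv_mul]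
  rw [hL, hO, div_mul_div_comm,
    eq_div_iff (mul_ne_zero (mul_ne_zero (mul_ne_zero (mul_ne_zero h2 h5) h4) h3) (pow_ne_zero 2 h1))]
  simp only [Finset.sum_range_succ, Finset.sum_range_zero]
  ring
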